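/- Let $M$ be an invertible real $N \times N$ matrix, $\sigma \in \mathbb{R}^N$, $z^* = M^{-1}\sigma$, and let $(z^k)$ satisfy $z^{k+1} = z^k + d^k$ with $\|d^k - M^{-1}(\sigma - M z^k)\|_2 \le \rho\,\|M^{-1}(\sigma - M z^k)\|_2$ for some $0 < \rho \le 1/2$. Let $C = \max(\|z^0 - z^*\|_2, 1)$ and let $L \ge 1$ be a natural number. Then for every $k \ge 4L + \log_2 C + 2$, one has $\|z^k - z^{k-1}\|_2 \le 2^{-4L}$; in particular, the stopping criterion $\|z^k - z^{k-1}\|_2 \le 2^{-4L}$ of the iterative linear solver is triggered after at most $\lceil 4L + \log_2 C + 2 \rceil = \mathcal{O}(L)$ iterations. -/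

import Mathlib

open Matrix BigOperators

/-- The Euclidean (ℓ₂) norm of a vector in `ℝ^N`. -/
noncomputable def enorm2 {N : ℕ} (v : Fin N → ℝ) : ℝ :=
  ‖(EuclideanSpace.equiv (Fin N) ℝ).symm v‖

/-!
The exact correction `M⁻¹ (σ - M zᵏ)` is `z* - zᵏ`, so solving for it with relative precision `ρ`
contracts the error `zᵏ - z*` by the factor `ρ`. Two successive iterates are at most the sum of
their errors apart, hence at most `(1 + ρ) ρᵏ ‖z⁰ - z*‖`; for `ρ = b⁻¹` each iteration thus gains
one base-`b` digit.
-/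

section Contraction

variable {X : Type*} [PseudoMetricSpace X] {x : ℕ → X} {a : X} {ρ : ℝ}

theorem dist_le_pow_mul_dist_of_dist_succ_le (hρ : 0 ≤ ρ)
    (h : ∀ k, dist (x (k + 1)) a ≤ ρ * dist (x k) a) (k : ℕ) :
    dist (x k) a ≤ ρ ^ k * dist (x 0) a :=
  le_geom (u := fun j => dist (x j) a) hρ k fun j _ => h j

theorem dist_succ_self_le_pow_mul_dist_of_dist_succ_le (hρ : 0 ≤ ρ)
    (h : ∀ k, dist (x (k + 1)) a ≤ ρ * dist (x k) a) (k : ℕ) :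
    dist (x (k + 1)) (x k) ≤ (1 + ρ) * (ρ ^ k * dist (x 0) a) :=
  calc
    dist (x (k + 1)) (x k) ≤ dist (x (k + 1)) a + dist (x k) a := dist_triangle_right _ _ _
    _ ≤ ρ * dist (x k) a + dist (x k) a := by gcongr; exact h k
    _ = (1 + ρ) * dist (x k) a := by ring
    _ ≤ (1 + ρ) * (ρ ^ k * dist (x 0) a) := by
      gcongr; exact dist_le_pow_mul_dist_of_dist_succ_le hρ h k

end Contraction

theorem inv_pow_mul_le_rpow_neg_of_add_logb_le {b C ℓ : ℝ} {k : ℕ} (hb : 1 < b) (hC : 0 < C)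
    (hk : ℓ + Real.logb b C ≤ k) : b⁻¹ ^ k * C ≤ b ^ (-ℓ) := by
  have hb₀ : 0 < b := zero_lt_one.trans hb
  calc
    b⁻¹ ^ k * C = b ^ (-(k : ℝ)) * b ^ Real.logb b C := by
      rw [Real.rpow_neg hb₀.le, Real.rpow_natCast, inv_pow, Real.rpow_logb hb₀ hb.ne' hC]
    _ = b ^ (-(k : ℝ) + Real.logb b C) := (Real.rpow_add hb₀ _ _).symm
    _ ≤ b ^ (-ℓ) := Real.rpow_le_rpow_of_exponent_le hb.le (by linarith)

theorem dist_add_le_mul_dist_of_norm_sub_le {E : Type*} [SeminormedAddCommGroup E] {a x d : E}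
    {ρ : ℝ} (h : ‖d - (a - x)‖ ≤ ρ * ‖a - x‖) : dist (x + d) a ≤ ρ * dist x a := by
  rwa [dist_eq_norm, dist_eq_norm', add_comm, ← sub_sub_eq_add_sub]

theorem map_sub_apply_of_leftInverse {E F : Type*} [AddGroup E] [AddGroup F] {A : E → F}
    {B : F →+ E} (hBA : Function.LeftInverse B A) (σ : F) (x : E) : B (σ - A x) = B σ - x := by
  rw [map_sub, hBA x]

theorem leftInverse_toEuclideanLin_inv {𝕜 n : Type*} [RCLike 𝕜] [Fintype n] [DecidableEq n]
    {M : Matrix n n 𝕜} (hM : IsUnit M) :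
    Function.LeftInverse M⁻¹.toEuclideanLin M.toEuclideanLin := by
  intro x
  have hdet : IsUnit M.det := M.isUnit_iff_isUnit_det.mp hM
  simp [Matrix.toLpLin_apply, Matrix.nonsing_inv_mul M hdet]

theorem iterative_solver_stopping_bound_general {E F : Type*} [SeminormedAddCommGroup E]
    [AddGroup F] (A : E → F) (B : F →+ E) (hBA : Function.LeftInverse B A) (σ : F)
    {b ρ : ℝ} (hb : 1 < b) (hρ : ρ ≤ b⁻¹) (z d : ℕ → E) (hstep : ∀ k, z (k + 1) = z k + d k)
    (happrox : ∀ k, ‖d k - B (σ - A (z k))‖ ≤ ρ * ‖B (σ - A (z k))‖)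
    {C : ℝ} (hC₀ : 0 < C) (hC : ‖z 0 - B σ‖ ≤ C) {ℓ : ℝ} {k : ℕ}
    (hk : ℓ + Real.logb b (2 * C) ≤ k) : ‖z (k + 1) - z k‖ ≤ b ^ (-ℓ) := by
  have hb₀ : 0 ≤ b⁻¹ := by positivity
  have hcontract (j : ℕ) : dist (z (j + 1)) (B σ) ≤ b⁻¹ * dist (z j) (B σ) := by
    rw [hstep]
    refine dist_add_le_mul_dist_of_norm_sub_le ?_
    rw [← map_sub_apply_of_leftInverse hBA]
    exact (happrox j).trans (by gcongr)
  calc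
    ‖z (k + 1) - z k‖ ≤ (1 + b⁻¹) * (b⁻¹ ^ k * ‖z 0 - B σ‖) := by
      simpa only [dist_eq_norm] using
        dist_succ_self_le_pow_mul_dist_of_dist_succ_le hb₀ hcontract k
    _ ≤ 2 * (b⁻¹ ^ k * C) := by
      gcongr
      linarith [inv_le_one_of_one_le₀ hb.le]
    _ = b⁻¹ ^ k * (2 * C) := by ring
    _ ≤ b ^ (-ℓ) := inv_pow_mul_le_rpow_neg_of_add_logb_le hb (by positivity) hk

/-- **O(L) iteration bound for the iterative quantum linear solver.** Under the
iterative-refinement contraction hypothesis with relative precision `0 < ρ ≤ 1/2`,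
letting `C = max(‖z⁰ - z*‖₂, 1)` and `L ≥ 1`, for every `k ≥ 4L + log₂ C + 2` the
stopping criterion `‖z^k - z^{k-1}‖₂ ≤ 2^{-4L}` holds. -/
theorem iterative_solver_stopping_bound
    (N : ℕ) (M : Matrix (Fin N) (Fin N) ℝ) (hM : IsUnit M)
    (σ : Fin N → ℝ) (zstar : Fin N → ℝ) (hzstar : zstar = M⁻¹.mulVec σ)
    (ρ : ℝ) (hρ0 : 0 < ρ) (hρ1 : ρ ≤ 1 / 2)
    (z d : ℕ → Fin N → ℝ)
    (hstep : ∀ k, z (k + 1) = z k + d k)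
    (happrox : ∀ k, enorm2 (d k - M⁻¹.mulVec (σ - M.mulVec (z k)))
        ≤ ρ * enorm2 (M⁻¹.mulVec (σ - M.mulVec (z k))))
    (C : ℝ) (hC : C = max (enorm2 (z 0 - zstar)) 1)
    (L : ℕ) (hL : 1 ≤ L) :
    ∀ k : ℕ, 4 * (L : ℝ) + Real.logb 2 C + 2 ≤ (k : ℝ) →
      enorm2 (z k - z (k - 1)) ≤ (2 : ℝ) ^ (-(4 * L : ℤ)) := by
  intro k hk
  subst hzstar hC
  have hC₁ : 1 ≤ max (enorm2 (z 0 - M⁻¹.mulVec σ)) 1 := le_max_right _ _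
  have hlog := Real.logb_nonneg one_lt_two hC₁
  obtain ⟨j, rfl⟩ : ∃ j, k = j + 1 := Nat.exists_eq_succ_of_ne_zero <| by
    rintro rfl
    push_cast at hk
    linarith [Nat.cast_nonneg (α := ℝ) L]
  have hbits : ((4 * L : ℤ) : ℝ) + Real.logb 2 (2 * max (enorm2 (z 0 - M⁻¹.mulVec σ)) 1) ≤ j := by
    rw [Real.logb_mul two_ne_zero (by positivity), Real.logb_self_eq_one one_lt_two]
    push_cast at hk ⊢
    linarith
  rw [← Real.rpow_intCast, Int.cast_neg]
  exact iterative_solver_stopping_bound_general M.toEuclideanLin M⁻¹.toEuclideanLin.toAddMonoidHom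
    (leftInverse_toEuclideanLin_inv hM) (WithLp.toLp 2 σ) one_lt_two (by simpa using hρ1)
    (fun i => WithLp.toLp 2 (z i)) (fun i => WithLp.toLp 2 (d i))
    (fun i => congrArg (WithLp.toLp 2) (hstep i)) happrox (by positivity) (le_max_left _ _) hbits
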